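/- arXiv:2406.00824 — 4 statements merged into one kernel-verified Lean document; each statement's English description precedes it below -/
import Mathlib

section
/- For any MDP M given by a symbolic description (variable set V, command set C including the target command) and any well-labeled finished PASG P for M with root n₀ labeled by the initial valuation, the maximal (resp. minimal) probability of reaching a target node in the MDP induced by P equals the maximal (resp. minimal) probability of reaching a target state in M. -/
/-!
Both extremal reachability probabilities are computed by value iteration, and value iteration is
insensitive to the way a PASG folds the state space.

For an MDP with finitely many actions let `W k s` be the optimal (maximal or minimal) probability of
reaching the target from `s` within `k` steps; it obeys the Bellman recursion. Its limit `V` is a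
fixed point of the Bellman operator (`MDP.value_fix`; for the minimum this needs that a finite
infimum commutes with an increasing supremum), and it equals the extremal reachability probability
over history-dependent strategies (`MDP.PmaxFrom_eq`, `MDP.PminFrom_eq`). For the maximum, a
strategy counting its steps attains each `W k`; for the minimum, the memoryless strategy choosing a
minimizing action for `V` never exceeds `V`.

A concrete state `s` and a node `n` are related when `s` is a concretization of the abstract label
of `n`. Related pairs enable the same commands by A1 and A2. If `n` is not covered, the edge for a
command and the command itself send every assignment to related successors by B2, and a covering
edge keeps `s` related to the covering node by C2. Hence, by induction on `k`, the `k`-step values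
on one side are bounded by the limit value on the other (`PASG.iter_le_value`,
`PASG.iter_le_value'`), so the limit values agree on related pairs, in particular on the initial
valuation and the root.
-/

open scoped ENNReal

/-- A Markov decision process with state space `S` and action set `A`:
`P s a s'` is the transition probability. For the MDPs considered here, for every
`s, a` the total mass `∑' s', P s a s'` is `1` (the action is enabled) or `0`. -/
structure MDP (S : Type*) (A : Type*) where
  P : S → A → S → ℝ≥0∞
  init : S

namespace MDP

variable {S A : Type*}

/-- An action is enabled in a state iff its outgoing probabilities sum to one. -/
def Enabled (M : MDP S A) (s : S) (a : A) : Prop :=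
  (∑' s', M.P s a s') = 1

/-- The last state of a history (a list of action/state steps), given the start state. -/
def lastSt (s : S) (h : List (A × S)) : S :=
  ((h.getLast?).map Prod.snd).getD s

open Classical in
/-- Probability of a finite path (a list of action/state steps) from state `s` with
accumulated history `h`, under the (history-dependent) strategy `σ`. -/
noncomputable def pathProb (M : MDP S A) (σ : List (A × S) → A) :
    S → List (A × S) → List (A × S) → ℝ≥0∞
  | _, _, [] => 1
  | s, h, (a, s') :: rest =>
      (if σ h = a then M.P s a s' else 0) * pathProb M σ s' (h ++ [(a, s')]) rest

/-- The path visits the target set `E` exactly at its final state and never before. -/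
def FirstHit (E : Set S) : S → List (A × S) → Prop
  | s, [] => s ∈ E
  | s, (_, s') :: rest => s ∉ E ∧ FirstHit E s' rest

/-- A finite trace: every step has positive probability. -/
def IsTrace (M : MDP S A) : S → List (A × S) → Prop
  | _, [] => True
  | s, (a, s') :: rest => 0 < M.P s a s' ∧ IsTrace M s' rest

/-- A strategy is valid from `s₀` if it always chooses an enabled action
whenever some action is enabled in the current state. -/
def ValidFrom (M : MDP S A) (s₀ : S) (σ : List (A × S) → A) : Prop :=
  ∀ h : List (A × S), (∃ a, M.Enabled (lastSt s₀ h) a) → M.Enabled (lastSt s₀ h) (σ h)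

/-- Probability of reaching `E` from `s₀` under strategy `σ`: the total mass of the
(pairwise incompatible) first-hitting paths. -/
noncomputable def reachProbFrom (M : MDP S A) (σ : List (A × S) → A) (s₀ : S)
    (E : Set S) : ℝ≥0∞ :=
  ∑' l : {l : List (A × S) // FirstHit E s₀ l}, pathProb M σ s₀ [] l.1

/-- Maximal probability of reaching `E` from `s`. -/
noncomputable def PmaxFrom (M : MDP S A) (E : Set S) (s : S) : ℝ≥0∞ :=
  ⨆ σ : {σ : List (A × S) → A // ValidFrom M s σ}, reachProbFrom M σ.1 s E

/-- Maximal probability of reaching `E` from the initial state. -/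
noncomputable def Pmax (M : MDP S A) (E : Set S) : ℝ≥0∞ :=
  PmaxFrom M E M.init

/-- Minimal probability of reaching `E` from `s`. -/
noncomputable def PminFrom (M : MDP S A) (E : Set S) (s : S) : ℝ≥0∞ :=
  ⨅ σ : {σ : List (A × S) → A // ValidFrom M s σ}, reachProbFrom M σ.1 s E

/-- Minimal probability of reaching `E` from the initial state. -/
noncomputable def Pmin (M : MDP S A) (E : Set S) : ℝ≥0∞ :=
  PminFrom M E M.init

end MDP

/-- A symbolic MDP over states `Val` (valuations of the variables): a set of commands,
each with a guard and a finite-support distribution over assignments (semantically,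
state transformers `Val → Val`), and an initial valuation. -/
structure SymMDP (Val : Type*) (Cmd : Type*) where
  guard : Cmd → Val → Prop
  dist : Cmd → PMF (Val → Val)
  finSupp : ∀ c, (dist c).support.Finite
  init : Val

open Classical in
/-- The MDP induced by a symbolic MDP: command `c` is enabled in `s` iff its guard
holds, and then the next-state distribution is the pushforward of `dist c` under
evaluation at `s`. -/
noncomputable def SymMDP.toMDP {Val Cmd : Type*} (M : SymMDP Val Cmd) : MDP Val Cmd where
  P := fun s c s' => if M.guard c s then ((M.dist c).map fun a => a s) s' else 0
  init := M.init

/-- Three-valued truth values for evaluating Boolean expressions on abstract states. -/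
inductive TV
  | tt
  | ff
  | uk

/-- An abstract domain over the concrete state set `Val`, with partially ordered
abstract states `AS`, abstraction `abstr`, concretization `conc`, and the Galois
condition `abstr A ≤ b ↔ A ⊆ conc b`. -/
structure AbsDom (Val : Type*) (AS : Type*) [PartialOrder AS] where
  abstr : Set Val → AS
  conc : AS → Set Val
  galois : ∀ (A : Set Val) (b : AS), abstr A ≤ b ↔ A ⊆ conc b

namespace AbsDom

variable {Val AS : Type*} [PartialOrder AS]

open Classical in
/-- Three-valued evaluation of a Boolean expression `b` on an abstract state:
`tt` if it holds in all concretizations, `ff` if in none, `uk` otherwise. -/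
noncomputable def beval (D : AbsDom Val AS) (b : Val → Prop) (x : AS) : TV :=
  if ∀ s ∈ D.conc x, b s then TV.tt
  else if ∀ s ∈ D.conc x, ¬ b s then TV.ff
  else TV.uk

/-- The abstract post operator: `post a x = abstr (a '' conc x)`. -/
def post (D : AbsDom Val AS) (a : Val → Val) (x : AS) : AS :=
  D.abstr (a '' D.conc x)

end AbsDom

open Classical in
/-- Two-valued evaluation of a Boolean expression in a concrete state, as a `TV`. -/
noncomputable def cevalTV {Val : Type*} (b : Val → Prop) (s : Val) : TV :=
  if b s then TV.tt else TV.ff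

/-- A probabilistic adaptive simulation graph (PASG). A transition edge `(n, c, f) ∈ ET`
goes from node `n` via command `c`; `f` matches each assignment in the support of `c`'s
distribution with its result node (thereby inducing the node distribution of the edge as
the pushforward of the assignment distribution). `EC n = some n'` means node `n` is
covered by its covering node `n'`; `Lc`/`La` are the concrete/abstract labelings. -/
structure PASG (Val AS Cmd Node : Type*) where
  ET : Set (Node × Cmd × ((Val → Val) → Node))
  EC : Node → Option Node
  Lc : Node → Val
  La : Node → AS

namespace PASG

variable {Val AS Cmd Node : Type*} [PartialOrder AS]

/-- A node is covered iff it has an outgoing covering edge. -/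
def Covered (P : PASG Val AS Cmd Node) (n : Node) : Prop := P.EC n ≠ none

/-- A node is expanded iff every command enabled in its concrete label has a
transition edge. -/
def Expanded (M : SymMDP Val Cmd) (P : PASG Val AS Cmd Node) (n : Node) : Prop :=
  ∀ c, M.guard c (P.Lc n) → ∃ f, (n, c, f) ∈ P.ET

/-- A PASG is finished iff every node is covered or expanded. -/
def Finished (M : SymMDP Val Cmd) (P : PASG Val AS Cmd Node) : Prop :=
  ∀ n, P.Covered n ∨ P.Expanded M n

/-- The well-labeledness constraints A1, A2, B1, B2, C1, C2, C3, D1. -/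
structure WellLabeled (M : SymMDP Val Cmd) (D : AbsDom Val AS)
    (P : PASG Val AS Cmd Node) : Prop where
  /-- A1: the abstract label contains the concrete label. -/
  A1 : ∀ n, P.Lc n ∈ D.conc (P.La n)
  /-- A2: the concrete label exactly represents the abstract label w.r.t. enabledness. -/
  A2 : ∀ n c, D.beval (M.guard c) (P.La n) = cevalTV (M.guard c) (P.Lc n)
  /-- B1: the command of a transition edge is enabled in the concrete label of its source. -/
  B1 : ∀ e ∈ P.ET, M.guard e.2.1 (P.Lc e.1)
  /-- B2 (probabilities): result nodes of distinct assignments are distinct, hence the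
  induced node distribution gives each result node exactly the assignment's probability. -/
  B2inj : ∀ e ∈ P.ET, Set.InjOn e.2.2 (M.dist e.2.1).support
  /-- B2 (concrete labels): the concrete label of a result node is the result of the
  corresponding assignment. -/
  B2c : ∀ e ∈ P.ET, ∀ a ∈ (M.dist e.2.1).support, P.Lc (e.2.2 a) = a (P.Lc e.1)
  /-- B2 (abstract labels): the abstract label of a result node overapproximates the
  abstract post of the source. -/
  B2a : ∀ e ∈ P.ET, ∀ a ∈ (M.dist e.2.1).support, D.post a (P.La e.1) ≤ P.La (e.2.2 a)
  /-- C1: the abstract label of the covering node contains the concrete label of the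
  covered node. -/
  C1 : ∀ n n', P.EC n = some n' → P.Lc n ∈ D.conc (P.La n')
  /-- C2: the covering node is at least as abstract as the covered node. -/
  C2 : ∀ n n', P.EC n = some n' → P.La n ≤ P.La n'
  /-- C3: a covering node is not itself covered. -/
  C3 : ∀ n n', P.EC n = some n' → P.EC n' = none
  /-- D1: at most one node with a given concrete label is non-covered. -/
  D1 : ∀ n n', n ≠ n' → P.Lc n = P.Lc n' → P.Covered n ∨ P.Covered n'

open Classical in
/-- The MDP induced by a finished PASG with root `n₀`: in a non-covered node a command
is enabled iff it has a transition edge (with the induced node distribution); a covered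
node has only the extra `cover` action (`Sum.inr ()`), leading with probability `1` to
its covering node. -/
noncomputable def toMDP (M : SymMDP Val Cmd) (P : PASG Val AS Cmd Node) (n₀ : Node) :
    MDP Node (Cmd ⊕ Unit) where
  init := n₀
  P := fun n act m =>
    match act with
    | Sum.inl c =>
        if h : P.EC n = none ∧ ∃ f, (n, c, f) ∈ P.ET then ((M.dist c).map h.2.choose) m
        else 0
    | Sum.inr _ =>
        match P.EC n with
        | some n' => if m = n' then 1 else 0
        | none => 0

end PASG

namespace MDP

variable {S A : Type*}

/-! ### Bellman operator and value iteration -/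

/-- The actions which a valid strategy may choose in `s`: the enabled ones, or all actions if none
is enabled. -/
def Allowed (M : MDP S A) (s : S) : Set A :=
  {a | (∃ b, M.Enabled s b) → M.Enabled s a}

/-- The expected value of `V` after taking action `a` in `s`. -/
noncomputable def Q (M : MDP S A) (V : S → ℝ≥0∞) (s : S) (a : A) : ℝ≥0∞ :=
  ∑' t, M.P s a t * V t

/-- The optimization direction: supremum for `true`, infimum for `false`. -/
noncomputable def opt (b : Bool) (X : Set ℝ≥0∞) : ℝ≥0∞ :=
  if b then sSup X else sInf X

open Classical in
/-- The Bellman operator for reaching `E`. -/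
noncomputable def bellman (M : MDP S A) (E : Set S) (b : Bool) (V : S → ℝ≥0∞) (s : S) : ℝ≥0∞ :=
  if s ∈ E then 1 else opt b (M.Q V s '' M.Allowed s)

open Classical in
/-- The optimal probability of reaching `E` within `k` steps. -/
noncomputable def iter (M : MDP S A) (E : Set S) (b : Bool) : ℕ → S → ℝ≥0∞
  | 0 => fun s => if s ∈ E then 1 else 0
  | k + 1 => bellman M E b (iter M E b k)

/-- The limit of value iteration. -/
noncomputable def value (M : MDP S A) (E : Set S) (b : Bool) (s : S) : ℝ≥0∞ :=
  ⨆ k, iter M E b k s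

/-- Both `sSup` and `sInf` are monotone for the Egli–Milner order on sets. -/
lemma opt_mono (b : Bool) {X Y : Set ℝ≥0∞} (h₁ : ∀ x ∈ X, ∃ y ∈ Y, x ≤ y)
    (h₂ : ∀ y ∈ Y, ∃ x ∈ X, x ≤ y) : opt b X ≤ opt b Y := by
  cases b
  · simpa [opt] using fun y hy => by
      obtain ⟨x, hx, hxy⟩ := h₂ y hy
      exact (sInf_le hx).trans hxy
  · simpa [opt] using fun x hx => by
      obtain ⟨y, hy, hxy⟩ := h₁ x hx
      exact hxy.trans (le_sSup hy)

lemma opt_singleton (b : Bool) (x : ℝ≥0∞) : opt b {x} = x := by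
  cases b <;> simp [opt]

lemma opt_mem (b : Bool) {X : Set ℝ≥0∞} (hX : X.Nonempty) (hf : X.Finite) : opt b X ∈ X := by
  cases b
  · simpa [opt] using hX.csInf_mem hf
  · simpa [opt] using hX.csSup_mem hf

lemma Q_mono (M : MDP S A) {V W : S → ℝ≥0∞} (h : ∀ s, V s ≤ W s) (s : S) (a : A) :
    M.Q V s a ≤ M.Q W s a :=
  ENNReal.tsum_le_tsum fun s' => by gcongr; exact h s'

lemma bellman_mono (M : MDP S A) (E : Set S) (b : Bool) {V W : S → ℝ≥0∞}
    (h : ∀ s, V s ≤ W s) (s : S) : bellman M E b V s ≤ bellman M E b W s := by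
  unfold bellman
  split_ifs
  · exact le_rfl
  · apply opt_mono
    · rintro _ ⟨a, ha, rfl⟩
      exact ⟨_, ⟨a, ha, rfl⟩, Q_mono M h s a⟩
    · rintro _ ⟨a, ha, rfl⟩
      exact ⟨_, ⟨a, ha, rfl⟩, Q_mono M h s a⟩

lemma iter_succ_le (M : MDP S A) (E : Set S) (b : Bool) (k : ℕ) :
    ∀ s, iter M E b k s ≤ iter M E b (k + 1) s := by
  induction k with
  | zero =>
    intro s
    simp only [iter, bellman]
    split_ifs <;> simp
  | succ k ih => exact bellman_mono M E b ih

lemma iter_mono (M : MDP S A) (E : Set S) (b : Bool) (s : S) :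
    Monotone fun k => iter M E b k s :=
  monotone_nat_of_le_succ fun k => iter_succ_le M E b k s

lemma iter_le_value_self (M : MDP S A) (E : Set S) (b : Bool) (k : ℕ) (s : S) :
    iter M E b k s ≤ value M E b s := le_iSup (fun k => iter M E b k s) k

/-- Monotone convergence for sums of extended nonnegative reals. -/
lemma tsum_iSup_of_monotone {ι : Type*} (f : ℕ → ι → ℝ≥0∞) (hf : ∀ i, Monotone fun k => f k i) :
    ∑' i, ⨆ k, f k i = ⨆ k, ∑' i, f k i := by
  simp_rw [ENNReal.tsum_eq_iSup_sum]
  rw [iSup_comm]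
  congr 1
  ext1 t
  exact ENNReal.finsetSum_iSup_of_monotone (fun i => hf i)

lemma Q_value (M : MDP S A) (E : Set S) (b : Bool) (s : S) (a : A) :
    M.Q (value M E b) s a = ⨆ k, M.Q (iter M E b k) s a := by
  unfold Q value
  simp_rw [ENNReal.mul_iSup]
  refine tsum_iSup_of_monotone (fun k s' => M.P s a s' * iter M E b k s') fun s' i j hij => ?_
  exact mul_le_mul_right (iter_mono M E b s' hij) _

lemma allowed_nonempty [Nonempty A] (M : MDP S A) (s : S) : (M.Allowed s).Nonempty := by
  by_cases h : ∃ b, M.Enabled s b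
  · exact ⟨h.choose, fun _ => h.choose_spec⟩
  · exact ⟨Classical.arbitrary A, fun h' => absurd h' h⟩

lemma value_of_mem (M : MDP S A) {E : Set S} (b : Bool) {s : S} (hs : s ∈ E) :
    value M E b s = 1 := by
  have h : ∀ k, iter M E b k s = 1 := by
    rintro (_ | k) <;> simp [iter, bellman, hs]
  simp [value, h]

/-- The limit of value iteration is a fixed point of the Bellman operator. -/
lemma value_fix [Finite A] (M : MDP S A) (E : Set S) (b : Bool) (s : S) :
    bellman M E b (value M E b) s = value M E b s := by
  by_cases hs : s ∈ E
  · rw [value_of_mem M b hs]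
    simp [bellman, hs]
  have h1 : value M E b s = ⨆ k, iter M E b (k + 1) s :=
    ((iter_mono M E b s).iSup_nat_add 1).symm
  rw [h1]
  simp only [iter, bellman, hs, if_false]
  cases b
  · simp only [opt, Bool.false_eq_true, if_false, sInf_image']
    simp_rw [Q_value]
    exact (iSup_iInf_of_monotone
      (f := fun (a : M.Allowed s) k => M.Q (iter M E false k) s a) fun a i j hij =>
      Q_mono M (fun s' => iter_mono M E false s' hij) s a).symm
  · simp only [opt, if_true, sSup_image']
    simp_rw [Q_value]
    exact iSup_comm

/-! ### Step-bounded reachability under a strategy -/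

open Classical in
/-- The probability, under `σ` with history `h` and current state `s`, of reaching `E` within `k`
further steps. -/
noncomputable def bounded (M : MDP S A) (σ : List (A × S) → A) (E : Set S) :
    ℕ → List (A × S) → S → ℝ≥0∞
  | 0, _, s => if s ∈ E then 1 else 0
  | k + 1, h, s => if s ∈ E then 1 else
      ∑' s', M.P s (σ h) s' * bounded M σ E k (h ++ [(σ h, s')]) s'

lemma not_firstHit_cons {E : Set S} {s : S} (hs : s ∈ E) :
    ∀ l : List (A × S), l ≠ [] → ¬ FirstHit E s l
  | [], h => absurd rfl h
  | (_, _) :: _, _ => fun h => h.1 hs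

open Classical in
lemma bounded_eq (M : MDP S A) (σ : List (A × S) → A) (E : Set S) (k : ℕ) :
    ∀ h s, bounded M σ E k h s =
      ∑' l : List (A × S), if FirstHit E s l ∧ l.length ≤ k then pathProb M σ s h l else 0 := by
  have hmem : ∀ (k : ℕ) (h : List (A × S)) (s : S), s ∈ E →
      (∑' l : List (A × S), if FirstHit E s l ∧ l.length ≤ k then pathProb M σ s h l else 0)
        = 1 := by
    intro k h s hs
    rw [tsum_eq_single []]
    · simp [FirstHit, hs, pathProb]
    · intro l hl
      simp [not_firstHit_cons hs l hl]
  induction k with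
  | zero =>
    intro h s
    by_cases hs : s ∈ E
    · rw [hmem 0 h s hs]; simp [bounded, hs]
    · rw [tsum_eq_single []]
      · simp [bounded, FirstHit, hs]
      · intro l hl
        simp [hl]
  | succ k ih =>
    intro h s
    by_cases hs : s ∈ E
    · rw [hmem (k + 1) h s hs]; simp [bounded, hs]
    -- The empty path contributes nothing, so the sum runs over first steps and remainders.
    have hinj : Function.Injective (fun p : (A × S) × List (A × S) => p.1 :: p.2) := by
      rintro ⟨a, b⟩ ⟨c, d⟩ h
      simpa using h
    rw [← hinj.tsum_eq]
    · rw [ENNReal.tsum_prod', ENNReal.tsum_prod', tsum_eq_single (σ h)]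
      · simp only [bounded, hs, if_false]
        refine tsum_congr fun s' => ?_
        rw [ih, ← ENNReal.tsum_mul_left]
        refine tsum_congr fun l => ?_
        simp [FirstHit, hs, pathProb]
      · intro a ha
        rw [ENNReal.tsum_eq_zero]
        intro s'
        rw [ENNReal.tsum_eq_zero]
        intro l
        simp [pathProb, Ne.symm ha]
    · intro l hl
      cases l with
      | nil => simp [FirstHit, hs] at hl
      | cons x l => exact ⟨(x, l), rfl⟩

lemma reachProbFrom_eq (M : MDP S A) (σ : List (A × S) → A) (s : S) (E : Set S) :
    reachProbFrom M σ s E = ⨆ k, bounded M σ E k [] s := by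
  classical
  simp_rw [bounded_eq]
  rw [← tsum_iSup_of_monotone]
  · unfold reachProbFrom
    refine (tsum_subtype {l : List (A × S) | FirstHit E s l}
      (fun l => pathProb M σ s [] l)).trans ?_
    refine tsum_congr fun l => ?_
    by_cases hl : FirstHit E s l
    · simp only [Set.indicator, Set.mem_ofPred_eq, hl, if_true, true_and]
      refine le_antisymm ?_ ?_
      · refine le_iSup_of_le l.length ?_
        simp
      · refine iSup_le fun k => ?_
        split_ifs <;> simp
    · simp [Set.indicator, hl]
  · intro l i j hij
    dsimp only
    split_ifs with h1 h2
    · exact le_rfl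
    · exact absurd ⟨h1.1, h1.2.trans hij⟩ h2
    · exact zero_le
    · exact le_rfl

/-! ### Value iteration computes the extremal reachability probabilities -/

lemma lastSt_append (s₀ : S) (h : List (A × S)) (a : A) (s : S) :
    lastSt s₀ (h ++ [(a, s)]) = s := by
  simp [lastSt]

lemma bounded_le_iter (M : MDP S A) (E : Set S) (s₀ : S) (σ : List (A × S) → A)
    (hσ : ValidFrom M s₀ σ) (k : ℕ) :
    ∀ h, bounded M σ E k h (lastSt s₀ h) ≤ iter M E true k (lastSt s₀ h) := by
  induction k with
  | zero => intro h; simp [bounded, iter]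
  | succ k ih =>
    intro h
    simp only [bounded, iter, bellman]
    split_ifs
    · exact le_rfl
    · simp only [opt, if_true]
      refine le_trans ?_ (le_sSup ⟨σ h, hσ h, rfl⟩)
      refine ENNReal.tsum_le_tsum fun s' => ?_
      gcongr
      simpa [lastSt_append] using ih (h ++ [(σ h, s')])

lemma iter_le_bounded (M : MDP S A) (E : Set S) (s₀ : S) (σ : List (A × S) → A)
    (hσ : ValidFrom M s₀ σ) (k : ℕ) :
    ∀ h, iter M E false k (lastSt s₀ h) ≤ bounded M σ E k h (lastSt s₀ h) := by
  induction k with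
  | zero => intro h; simp [bounded, iter]
  | succ k ih =>
    intro h
    simp only [bounded, iter, bellman]
    split_ifs
    · exact le_rfl
    · simp only [opt, Bool.false_eq_true, if_false]
      refine le_trans (sInf_le ⟨σ h, hσ h, rfl⟩) ?_
      refine ENNReal.tsum_le_tsum fun t => ?_
      gcongr
      simpa [lastSt_append] using ih (h ++ [(σ h, t)])

/-- Some allowed action attains the optimum in the Bellman operator. -/
lemma exists_optimal [Finite A] [Nonempty A] (M : MDP S A) (b : Bool) (V : S → ℝ≥0∞) (s : S) :
    ∃ a ∈ M.Allowed s, M.Q V s a = opt b (M.Q V s '' M.Allowed s) :=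
  opt_mem b ((allowed_nonempty M s).image _) (Set.toFinite _)

lemma PmaxFrom_eq [Finite A] [Nonempty A] (M : MDP S A) (E : Set S) (s : S) :
    PmaxFrom M E s = value M E true s := by
  refine le_antisymm ?_ ?_
  · refine iSup_le fun σ => ?_
    rw [reachProbFrom_eq]
    exact iSup_mono fun k => bounded_le_iter M E s σ.1 σ.2 k []
  · refine iSup_le fun k => ?_
    choose f hf hfo using fun j => exists_optimal M true (iter M E true j)
    -- With `i` steps taken, the budget after the next step is `k - 1 - i`.
    let σ : List (A × S) → A := fun h => f (k - 1 - h.length) (lastSt s h)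
    have hσ : ValidFrom M s σ := fun h => hf _ _
    have key : ∀ j h, h.length + j = k →
        iter M E true j (lastSt s h) ≤ bounded M σ E j h (lastSt s h) := by
      intro j
      induction j with
      | zero => intro h _; simp [bounded, iter]
      | succ j ih =>
        intro h hk
        simp only [bounded, iter, bellman]
        split_ifs
        · exact le_rfl
        · have hj : k - 1 - h.length = j := by omega
          rw [← hfo]
          have hσh : σ h = f j (lastSt s h) := by simp only [σ, hj]
          rw [← hσh]
          refine ENNReal.tsum_le_tsum fun s' => ?_
          gcongr
          have := ih (h ++ [(σ h, s')]) (by simp; omega)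
          simpa [lastSt_append] using this
    refine le_trans ?_ (le_iSup (fun σ : {σ // ValidFrom M s σ} => reachProbFrom M σ.1 s E) ⟨σ, hσ⟩)
    rw [reachProbFrom_eq]
    exact le_iSup_of_le k (key k [] (by simp))

lemma PminFrom_eq [Finite A] [Nonempty A] (M : MDP S A) (E : Set S) (s : S) :
    PminFrom M E s = value M E false s := by
  refine le_antisymm ?_ ?_
  · choose f hf hfo using exists_optimal M false (value M E false)
    let σ : List (A × S) → A := fun h => f (lastSt s h)
    have hσ : ValidFrom M s σ := fun h => hf _
    have key : ∀ k h, bounded M σ E k h (lastSt s h) ≤ value M E false (lastSt s h) := by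
      intro k
      induction k with
      | zero => intro h; exact iter_le_value_self M E false 0 _
      | succ k ih =>
        intro h
        rw [← value_fix]
        simp only [bounded, bellman]
        split_ifs
        · exact le_rfl
        · rw [← hfo]
          refine ENNReal.tsum_le_tsum fun s' => ?_
          gcongr
          simpa [lastSt_append] using ih (h ++ [(σ h, s')])
    refine le_trans (iInf_le (fun σ : {σ // ValidFrom M s σ} => reachProbFrom M σ.1 s E) ⟨σ, hσ⟩) ?_
    rw [reachProbFrom_eq]
    exact iSup_le fun k => key k []
  · refine le_iInf fun σ => ?_
    rw [reachProbFrom_eq]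
    exact iSup_mono fun k => iter_le_bounded M E s σ.1 σ.2 k []

end MDP

/-! ### Transitions of the two induced MDPs -/

/-- Change of variables for the expectation under a pushforward distribution. -/
lemma PMF.tsum_map_mul {α β : Type*} (p : PMF α) (g : α → β) (V : β → ℝ≥0∞) :
    ∑' y, (p.map g) y * V y = ∑' x, p x * V (g x) := by
  classical
  simp_rw [PMF.map_apply, ← ENNReal.tsum_mul_right]
  rw [ENNReal.tsum_comm]
  refine tsum_congr fun x => ?_
  rw [tsum_eq_single (g x)]
  · simp
  · intro y hy
    simp [hy]

namespace PASG

variable {Val AS Cmd Node : Type*} {M : SymMDP Val Cmd} {P : PASG Val AS Cmd Node}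

lemma sym_enabled_iff (M : SymMDP Val Cmd) (s : Val) (c : Cmd) :
    M.toMDP.Enabled s c ↔ M.guard c s := by
  by_cases h : M.guard c s
  · simp only [MDP.Enabled, SymMDP.toMDP, h, if_true, iff_true]
    exact PMF.tsum_coe _
  · simp [MDP.Enabled, SymMDP.toMDP, h]

lemma sym_Q (M : SymMDP Val Cmd) (V : Val → ℝ≥0∞) {s : Val} {c : Cmd} (h : M.guard c s) :
    M.toMDP.Q V s c = ∑' a, M.dist c a * V (a s) := by
  simp only [MDP.Q, SymMDP.toMDP, h, if_true]
  exact PMF.tsum_map_mul _ _ _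

lemma sym_Q_zero (M : SymMDP Val Cmd) (V : Val → ℝ≥0∞) {s : Val} {c : Cmd} (h : ¬ M.guard c s) :
    M.toMDP.Q V s c = 0 := by
  simp [MDP.Q, SymMDP.toMDP, h]

/-- At a node that is not covered, every enabled command acts through one transition edge. -/
lemma exists_edge (hfin : Finished M P) (n₀ : Node)
    {n : Node} (hn : P.EC n = none) {c : Cmd} (hg : M.guard c (P.Lc n)) :
    ∃ f, (n, c, f) ∈ P.ET ∧
      (∀ m, (toMDP M P n₀).P n (Sum.inl c) m = ((M.dist c).map f) m) := by
  have hex : ∃ f, (n, c, f) ∈ P.ET := by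
    rcases hfin n with h | h
    · exact absurd hn h
    · exact h c hg
  have h : P.EC n = none ∧ ∃ f, (n, c, f) ∈ P.ET := ⟨hn, hex⟩
  exact ⟨h.2.choose, h.2.choose_spec, fun m => by simp only [toMDP]; rw [dif_pos h]⟩

lemma P_inr_zero (n₀ : Node) {n : Node} (hn : P.EC n = none) (u : Unit) (m : Node) :
    (toMDP M P n₀).P n (Sum.inr u) m = 0 := by
  simp [toMDP, hn]

lemma Q_inr_zero (n₀ : Node) {n : Node} (hn : P.EC n = none) (u : Unit) (V : Node → ℝ≥0∞) :
    (toMDP M P n₀).Q V n (Sum.inr u) = 0 := by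
  simp [MDP.Q, P_inr_zero n₀ hn]

/-- In a covered node outside the target, the Bellman operator follows the covering edge. -/
lemma bellman_covered (n₀ : Node) {n n' : Node} (hc : P.EC n = some n') (E : Set Node) (b : Bool)
    (hE : n ∉ E) (V : Node → ℝ≥0∞) : MDP.bellman (toMDP M P n₀) E b V n = V n' := by
  have hinr : (toMDP M P n₀).Enabled n (Sum.inr ()) := by
    simp [MDP.Enabled, toMDP, hc]
  have hall : (toMDP M P n₀).Allowed n = {Sum.inr ()} := by
    ext a
    simp only [Set.mem_singleton_iff]
    constructor
    · intro ha
      rcases a with c | u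
      · have := ha ⟨_, hinr⟩
        simp [MDP.Enabled, toMDP, hc] at this
      · rfl
    · rintro rfl _
      exact hinr
  simp only [MDP.bellman, hE, if_false, hall, Set.image_singleton, MDP.opt_singleton]
  simp [MDP.Q, toMDP, hc]

/-! ### Relating concrete states and nodes -/

variable [PartialOrder AS] {D : AbsDom Val AS}

/-- All concretizations of a node's abstract label enable the same commands as its concrete
label. -/
lemma guard_iff (hwl : WellLabeled M D P) {s : Val} {n : Node} (h : s ∈ D.conc (P.La n))
    (c : Cmd) : M.guard c (P.Lc n) ↔ M.guard c s := by
  have h2 := hwl.A2 n c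
  unfold AbsDom.beval cevalTV at h2
  split_ifs at h2 with h3 h4 h5 h6
  · exact ⟨fun _ => h3 s h, fun _ => h4⟩
  · exact ⟨fun hg => absurd hg h6, fun hg => absurd hg (h5 s h)⟩

/-- A covering edge preserves relatedness. -/
lemma rel_cover (hwl : WellLabeled M D P) {s : Val} {n n' : Node} (h : s ∈ D.conc (P.La n))
    (hc : P.EC n = some n') : s ∈ D.conc (P.La n') := by
  -- `conc` is monotone: the Galois condition turns `conc x ⊆ conc x` into `abstr (conc x) ≤ x`.
  have h1 : D.abstr (D.conc (P.La n)) ≤ P.La n := (D.galois _ _).2 subset_rfl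
  exact (D.galois _ _).1 (h1.trans (hwl.C2 n n' hc)) h

lemma rel_step (hwl : WellLabeled M D P) {s : Val} {n : Node} {c : Cmd} {f : (Val → Val) → Node}
    (h : s ∈ D.conc (P.La n)) (he : (n, c, f) ∈ P.ET) {a : Val → Val}
    (ha : a ∈ (M.dist c).support) : a s ∈ D.conc (P.La (f a)) :=
  (D.galois _ _).1 (hwl.B2a _ he a ha) ⟨s, h, rfl⟩

lemma P_inl_zero (hwl : WellLabeled M D P) (n₀ : Node) {n : Node} {c : Cmd}
    (hg : ¬ M.guard c (P.Lc n)) (m : Node) : (toMDP M P n₀).P n (Sum.inl c) m = 0 := by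
  simp only [toMDP]
  rw [dif_neg]
  rintro ⟨_, f, hf⟩
  exact hg (hwl.B1 _ hf)

lemma enabled_inl_iff (hwl : WellLabeled M D P) (hfin : Finished M P) (n₀ : Node)
    {n : Node} (hn : P.EC n = none) (c : Cmd) :
    (toMDP M P n₀).Enabled n (Sum.inl c) ↔ M.guard c (P.Lc n) := by
  by_cases hg : M.guard c (P.Lc n)
  · obtain ⟨f, -, hP⟩ := exists_edge hfin n₀ hn hg
    simp only [MDP.Enabled, hP, hg, iff_true]
    exact PMF.tsum_coe _
  · simp [MDP.Enabled, P_inl_zero hwl n₀ hg, hg]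

/-- On related pairs without covering, an allowed command is allowed on both sides. -/
lemma allowed_iff (hwl : WellLabeled M D P) (hfin : Finished M P) (n₀ : Node)
    {s : Val} {n : Node} (h : s ∈ D.conc (P.La n)) (hn : P.EC n = none) (c : Cmd) :
    Sum.inl c ∈ (toMDP M P n₀).Allowed n ↔ c ∈ M.toMDP.Allowed s := by
  have h1 : (∃ b, (toMDP M P n₀).Enabled n b) ↔ ∃ b, M.toMDP.Enabled s b := by
    constructor
    · rintro ⟨b | u, hb⟩
      · exact ⟨b, (sym_enabled_iff M s b).2
          ((guard_iff hwl h b).1 ((enabled_inl_iff hwl hfin n₀ hn b).1 hb))⟩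
      · simp [MDP.Enabled, P_inr_zero n₀ hn] at hb
    · rintro ⟨b, hb⟩
      exact ⟨Sum.inl b, (enabled_inl_iff hwl hfin n₀ hn b).2
        ((guard_iff hwl h b).2 ((sym_enabled_iff M s b).1 hb))⟩
  simp only [MDP.Allowed, Set.mem_ofPred_eq, h1, enabled_inl_iff hwl hfin n₀ hn,
    sym_enabled_iff, guard_iff hwl h]

/-- At a related, non-covered pair, the expected values of one command are sums over the same
assignment distribution, with related successor pairs. If the command is disabled, both vanish. -/
lemma Q_cases (hwl : WellLabeled M D P) (hfin : Finished M P) (n₀ : Node)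
    {s : Val} {n : Node} (h : s ∈ D.conc (P.La n)) (hn : P.EC n = none) (c : Cmd)
    (U : Val → ℝ≥0∞) (V : Node → ℝ≥0∞) :
    (M.toMDP.Q U s c = 0 ∧ (toMDP M P n₀).Q V n (Sum.inl c) = 0) ∨
    ∃ f : (Val → Val) → Node, (∀ a ∈ (M.dist c).support, a s ∈ D.conc (P.La (f a))) ∧
      M.toMDP.Q U s c = ∑' a, M.dist c a * U (a s) ∧
      (toMDP M P n₀).Q V n (Sum.inl c) = ∑' a, M.dist c a * V (f a) := by
  by_cases hg : M.guard c (P.Lc n)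
  · obtain ⟨f, hf, hP⟩ := exists_edge hfin n₀ hn hg
    refine Or.inr ⟨f, fun a ha => rel_step hwl h hf ha, sym_Q M U ((guard_iff hwl h c).1 hg), ?_⟩
    simp only [MDP.Q, hP]
    exact PMF.tsum_map_mul _ _ _
  · refine Or.inl ⟨sym_Q_zero M U fun hg' => hg ((guard_iff hwl h c).2 hg'), ?_⟩
    simp [MDP.Q, P_inl_zero hwl n₀ hg]

lemma Q_le_Q (hwl : WellLabeled M D P) (hfin : Finished M P) (n₀ : Node)
    {s : Val} {n : Node} (h : s ∈ D.conc (P.La n)) (hn : P.EC n = none) (c : Cmd)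
    {U : Val → ℝ≥0∞} {V : Node → ℝ≥0∞} (hUV : ∀ s n, s ∈ D.conc (P.La n) → U s ≤ V n) :
    M.toMDP.Q U s c ≤ (toMDP M P n₀).Q V n (Sum.inl c) := by
  rcases Q_cases hwl hfin n₀ h hn c U V with ⟨h1, -⟩ | ⟨f, hf, h1, h2⟩
  · simp [h1]
  · rw [h1, h2]
    refine ENNReal.tsum_le_tsum fun a => ?_
    by_cases ha : a ∈ (M.dist c).support
    · gcongr
      exact hUV _ _ (hf a ha)
    · simp [(PMF.apply_eq_zero_iff _ _).2 ha]

lemma Q_le_Q' (hwl : WellLabeled M D P) (hfin : Finished M P) (n₀ : Node)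
    {s : Val} {n : Node} (h : s ∈ D.conc (P.La n)) (hn : P.EC n = none) (c : Cmd)
    {U : Val → ℝ≥0∞} {V : Node → ℝ≥0∞} (hUV : ∀ s n, s ∈ D.conc (P.La n) → V n ≤ U s) :
    (toMDP M P n₀).Q V n (Sum.inl c) ≤ M.toMDP.Q U s c := by
  rcases Q_cases hwl hfin n₀ h hn c U V with ⟨-, h1⟩ | ⟨f, hf, h1, h2⟩
  · simp [h1]
  · rw [h1, h2]
    refine ENNReal.tsum_le_tsum fun a => ?_
    by_cases ha : a ∈ (M.dist c).support
    · gcongr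
      exact hUV _ _ (hf a ha)
    · simp [(PMF.apply_eq_zero_iff _ _).2 ha]

/-- At a node that is not covered, the cover action is allowed only in a deadlock, where every
command of the symbolic MDP has expected value zero too. -/
lemma inr_allowed (hwl : WellLabeled M D P) (hfin : Finished M P) (n₀ : Node)
    {s : Val} {n : Node} (h : s ∈ D.conc (P.La n)) (hn : P.EC n = none) {u : Unit}
    (hu : Sum.inr u ∈ (toMDP M P n₀).Allowed n) (c : Cmd) (U : Val → ℝ≥0∞) :
    c ∈ M.toMDP.Allowed s ∧ M.toMDP.Q U s c = 0 := by
  have hno : ¬ (toMDP M P n₀).Enabled n (Sum.inr u) := by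
    simp [MDP.Enabled, P_inr_zero n₀ hn]
  have hdead : ∀ d, ¬ M.guard d s := fun d hd =>
    hno (hu ⟨Sum.inl d, (enabled_inl_iff hwl hfin n₀ hn d).2 ((guard_iff hwl h d).2 hd)⟩)
  refine ⟨?_, sym_Q_zero M U (hdead c)⟩
  rintro ⟨d, hd⟩
  exact absurd ((sym_enabled_iff M s d).1 hd) (hdead d)

/-! ### Comparison of values -/

lemma bellman_le (hwl : WellLabeled M D P) (hfin : Finished M P) (n₀ : Node) (tc : Cmd) (b : Bool)
    {s : Val} {n : Node} (h : s ∈ D.conc (P.La n)) (hn : P.EC n = none)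
    {U : Val → ℝ≥0∞} {V : Node → ℝ≥0∞} (hUV : ∀ s n, s ∈ D.conc (P.La n) → U s ≤ V n) :
    MDP.bellman M.toMDP {s | M.guard tc s} b U s ≤
      MDP.bellman (toMDP M P n₀) {n | M.guard tc (P.Lc n)} b V n := by
  have hg := guard_iff hwl h tc
  by_cases hs : M.guard tc s
  · simp [MDP.bellman, hs, hg.2 hs]
  · have hn' : ¬ M.guard tc (P.Lc n) := fun h' => hs (hg.1 h')
    simp only [MDP.bellman, Set.mem_ofPred_eq, hs, hn', if_false]
    apply MDP.opt_mono
    · rintro _ ⟨c, hc, rfl⟩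
      exact ⟨_, ⟨Sum.inl c, (allowed_iff hwl hfin n₀ h hn c).2 hc, rfl⟩,
        Q_le_Q hwl hfin n₀ h hn c hUV⟩
    · rintro _ ⟨c | u, hc, rfl⟩
      · exact ⟨_, ⟨c, (allowed_iff hwl hfin n₀ h hn c).1 hc, rfl⟩, Q_le_Q hwl hfin n₀ h hn c hUV⟩
      · obtain ⟨h1, h2⟩ := inr_allowed hwl hfin n₀ h hn hc tc U
        exact ⟨_, ⟨tc, h1, rfl⟩, by simp [h2]⟩

lemma bellman_le' (hwl : WellLabeled M D P) (hfin : Finished M P) (n₀ : Node) (tc : Cmd) (b : Bool)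
    {s : Val} {n : Node} (h : s ∈ D.conc (P.La n)) (hn : P.EC n = none)
    {U : Val → ℝ≥0∞} {V : Node → ℝ≥0∞} (hUV : ∀ s n, s ∈ D.conc (P.La n) → V n ≤ U s) :
    MDP.bellman (toMDP M P n₀) {n | M.guard tc (P.Lc n)} b V n ≤
      MDP.bellman M.toMDP {s | M.guard tc s} b U s := by
  have hg := guard_iff hwl h tc
  by_cases hs : M.guard tc s
  · simp [MDP.bellman, hs, hg.2 hs]
  · have hn' : ¬ M.guard tc (P.Lc n) := fun h' => hs (hg.1 h')
    simp only [MDP.bellman, Set.mem_ofPred_eq, hs, hn', if_false]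
    apply MDP.opt_mono
    · rintro _ ⟨c | u, hc, rfl⟩
      · exact ⟨_, ⟨c, (allowed_iff hwl hfin n₀ h hn c).1 hc, rfl⟩, Q_le_Q' hwl hfin n₀ h hn c hUV⟩
      · obtain ⟨h1, h2⟩ := inr_allowed hwl hfin n₀ h hn hc tc U
        exact ⟨_, ⟨tc, h1, rfl⟩, by simp [Q_inr_zero n₀ hn]⟩
    · rintro _ ⟨c, hc, rfl⟩
      exact ⟨_, ⟨Sum.inl c, (allowed_iff hwl hfin n₀ h hn c).2 hc, rfl⟩,
        Q_le_Q' hwl hfin n₀ h hn c hUV⟩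

/-- Step-bounded values of the symbolic MDP are at most the value at any related node. -/
lemma iter_le_value [Finite Cmd] (hwl : WellLabeled M D P) (hfin : Finished M P) (n₀ : Node)
    (tc : Cmd) (b : Bool) (k : ℕ) : ∀ s n, s ∈ D.conc (P.La n) →
    MDP.iter M.toMDP {s | M.guard tc s} b k s ≤
      MDP.value (toMDP M P n₀) {n | M.guard tc (P.Lc n)} b n := by
  induction k with
  | zero =>
    intro s n h
    refine le_trans (le_of_eq ?_) (MDP.iter_le_value_self _ _ b 0 n)
    have hg := guard_iff hwl h tc
    by_cases hs : M.guard tc s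
    · simp [MDP.iter, hs, hg.2 hs]
    · have hn' : ¬ M.guard tc (P.Lc n) := fun h' => hs (hg.1 h')
      simp [MDP.iter, hs, hn']
  | succ k ih =>
    have hstep : ∀ s n, s ∈ D.conc (P.La n) → P.EC n = none →
        MDP.iter M.toMDP {s | M.guard tc s} b (k + 1) s ≤
          MDP.value (toMDP M P n₀) {n | M.guard tc (P.Lc n)} b n := by
      intro s n h hn
      rw [← MDP.value_fix]
      exact bellman_le hwl hfin n₀ tc b h hn ih
    intro s n h
    cases hn : P.EC n with
    | none => exact hstep s n h hn
    | some n' =>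
      by_cases hE : M.guard tc (P.Lc n)
      · rw [MDP.value_of_mem _ b (show n ∈ {n | M.guard tc (P.Lc n)} from hE)]
        have hs : M.guard tc s := (guard_iff hwl h tc).1 hE
        simp [MDP.iter, MDP.bellman, hs]
      · rw [← MDP.value_fix, bellman_covered n₀ hn _ b hE]
        exact hstep s n' (rel_cover hwl h hn) (hwl.C3 n n' hn)

/-- Step-bounded values of the PASG are at most the value at any related concrete state. -/
lemma iter_le_value' [Finite Cmd] (hwl : WellLabeled M D P) (hfin : Finished M P) (n₀ : Node)
    (tc : Cmd) (b : Bool) (k : ℕ) : ∀ s n, s ∈ D.conc (P.La n) →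
    MDP.iter (toMDP M P n₀) {n | M.guard tc (P.Lc n)} b k n ≤
      MDP.value M.toMDP {s | M.guard tc s} b s := by
  induction k with
  | zero =>
    intro s n h
    refine le_trans (le_of_eq ?_) (MDP.iter_le_value_self _ _ b 0 s)
    have hg := guard_iff hwl h tc
    by_cases hs : M.guard tc s
    · simp [MDP.iter, hs, hg.2 hs]
    · have hn' : ¬ M.guard tc (P.Lc n) := fun h' => hs (hg.1 h')
      simp [MDP.iter, hs, hn']
  | succ k ih =>
    intro s n h
    cases hn : P.EC n with
    | none =>
      rw [← MDP.value_fix]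
      exact bellman_le' hwl hfin n₀ tc b h hn ih
    | some n' =>
      by_cases hE : M.guard tc (P.Lc n)
      · rw [MDP.value_of_mem _ b (show s ∈ {s | M.guard tc s} from (guard_iff hwl h tc).1 hE)]
        simp [MDP.iter, MDP.bellman, hE]
      · simp only [MDP.iter]
        rw [bellman_covered n₀ hn _ b hE]
        exact ih s n' (rel_cover hwl h hn)

lemma value_eq [Finite Cmd] (hwl : WellLabeled M D P) (hfin : Finished M P) (n₀ : Node)
    (tc : Cmd) (b : Bool) {s : Val} {n : Node} (h : s ∈ D.conc (P.La n)) :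
    MDP.value (toMDP M P n₀) {n | M.guard tc (P.Lc n)} b n =
      MDP.value M.toMDP {s | M.guard tc s} b s :=
  le_antisymm (iSup_le fun k => iter_le_value' hwl hfin n₀ tc b k s n h)
    (iSup_le fun k => iter_le_value hwl hfin n₀ tc b k s n h)

end PASG

/-- For any symbolic MDP `M` (whose command set includes the target
command `tc`, with guard the target formula `φ` and Dirac-on-identity distribution)
and any well-labeled finished PASG `P` for `M` with root `n₀` labeled by the initial
valuation, the maximal (resp. minimal) probability of reaching a target node in the
MDP induced by `P` equals the maximal (resp. minimal) probability of reaching a target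
state in `M`. -/
theorem pasg_soundness {Val AS Cmd Node : Type*} [PartialOrder AS] [Finite Cmd]
    (M : SymMDP Val Cmd) (D : AbsDom Val AS) (P : PASG Val AS Cmd Node)
    (φ : Val → Prop) (tc : Cmd)
    (htcg : ∀ s, M.guard tc s ↔ φ s) (htcd : M.dist tc = PMF.pure id)
    (hwl : PASG.WellLabeled M D P) (hfin : PASG.Finished M P)
    (n₀ : Node) (hroot : P.Lc n₀ = M.init) :
    MDP.Pmax (PASG.toMDP M P n₀) {n | M.guard tc (P.Lc n)} =
        MDP.Pmax M.toMDP {s | M.guard tc s} ∧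
    MDP.Pmin (PASG.toMDP M P n₀) {n | M.guard tc (P.Lc n)} =
        MDP.Pmin M.toMDP {s | M.guard tc s} := by
  have : Nonempty Cmd := ⟨tc⟩
  have h : M.init ∈ D.conc (P.La n₀) := hroot ▸ hwl.A1 n₀
  unfold MDP.Pmax MDP.Pmin
  rw [MDP.PmaxFrom_eq, MDP.PmaxFrom_eq, MDP.PminFrom_eq, MDP.PminFrom_eq]
  exact ⟨PASG.value_eq hwl hfin n₀ tc true h, PASG.value_eq hwl hfin n₀ tc false h⟩
end

section
/- Let P be any well-labeled finished PASG for the symbolic MDP M, with root n₀ such that L_c(n₀)=val0 and val0∈γ(L_a(n₀)). For every trace s0 –c1→ s1 –c2→ … –ck→ sk of M with s0=val0, there exists a trace of the MDP induced by P whose coverless representation is n₀ –c1→ n1 –c2→ … –ck→ nk such that s_i ∈ γ(L_a(n_i)) for all i=1..k. -/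
/-!
The trace is lifted step by step, keeping the invariant that the current concrete state `s`
lies in `γ (La n)` for the current node `n`. If `n` is covered, a `cover` step leads to a
non-covered node (C3) whose abstract label is larger (C2), so the invariant survives
(`exists_uncovered`). In a non-covered node the PASG is expanded; by A2 a command enabled in
`s ∈ γ (La n)` is enabled in `Lc n` as well (`guard_Lc`), so it has a transition edge, and by B2
the node matched to the assignment that produced the next concrete state has that state in its
concretization (`exists_command_step`). Induction over the concrete trace, with the start node
and start state generalized, concludes (`lift_from`).
-/

open scoped ENNReal

namespace PASG

variable {Val AS Cmd Node : Type*} [PartialOrder AS]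
  {M : SymMDP Val Cmd} {D : AbsDom Val AS} {P : PASG Val AS Cmd Node}

theorem conc_mono (D : AbsDom Val AS) {x y : AS} (h : x ≤ y) : D.conc x ⊆ D.conc y :=
  (D.galois _ _).1 (((D.galois _ _).2 subset_rfl).trans h)

/-- By A2 the guard of a command is constant on the concretization of a node, so a command
enabled in some represented state is enabled in the concrete label. -/
theorem guard_Lc (hwl : WellLabeled M D P) {n : Node} {s : Val} {c : Cmd}
    (hs : s ∈ D.conc (P.La n)) (hg : M.guard c s) : M.guard c (P.Lc n) := by
  by_contra hn
  have h := hwl.A2 n c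
  have h1 : ¬ ∀ s ∈ D.conc (P.La n), M.guard c s := fun h' => hn (h' _ (hwl.A1 n))
  have h2 : ¬ ∀ s ∈ D.conc (P.La n), ¬ M.guard c s := fun h' => h' _ hs hg
  rw [AbsDom.beval, cevalTV, if_neg h1, if_neg h2, if_neg hn] at h
  cases h

/-- From every node representing `s`, at most one `cover` step leads to a non-covered node
representing `s`. The prefix `pre` consists of that step, if there is one; it is described by
its effect on continuations. -/
theorem exists_uncovered (hwl : WellLabeled M D P) (n₀ : Node) {n : Node} {s : Val}
    (hs : s ∈ D.conc (P.La n)) :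
    ∃ (m : Node) (pre : List ((Cmd ⊕ Unit) × Node)), P.EC m = none ∧ s ∈ D.conc (P.La m) ∧
      (pre.filter fun q => q.1.isLeft) = [] ∧
      ∀ τ, MDP.IsTrace (toMDP M P n₀) m τ → MDP.IsTrace (toMDP M P n₀) n (pre ++ τ) := by
  cases hc : P.EC n with
  | none => exact ⟨n, [], hc, hs, rfl, fun _ h => h⟩
  | some m =>
    refine ⟨m, [(Sum.inr (), m)], hwl.C3 n m hc, conc_mono D (hwl.C2 n m hc) hs, rfl,
      fun τ h => ⟨?_, h⟩⟩
    simp [toMDP, hc]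

/-- A positive-probability step of the symbolic MDP from a state represented by a non-covered
node is matched by a step with the same command in the MDP of the PASG. -/
theorem exists_command_step (hwl : WellLabeled M D P) (hfin : Finished M P) (n₀ : Node)
    {n : Node} {s s' : Val} {c : Cmd} (hn : P.EC n = none) (hs : s ∈ D.conc (P.La n))
    (hstep : 0 < M.toMDP.P s c s') :
    ∃ m, 0 < (toMDP M P n₀).P n (Sum.inl c) m ∧ s' ∈ D.conc (P.La m) := by
  simp only [SymMDP.toMDP] at hstep
  split_ifs at hstep with hg
  · have hsupp : s' ∈ ((M.dist c).map fun a => a s).support := hstep.ne'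
    obtain ⟨a, ha, rfl⟩ := (PMF.mem_support_map_iff _ _ _).1 hsupp
    have hex : P.EC n = none ∧ ∃ f, (n, c, f) ∈ P.ET :=
      ⟨hn, (hfin n).resolve_left (fun h => h hn) c (guard_Lc hwl hs hg)⟩
    -- The edge must be the one chosen in the definition of the induced MDP.
    refine ⟨hex.2.choose a, ?_, ?_⟩
    · simp only [toMDP]
      rw [dif_pos hex]
      exact pos_iff_ne_zero.2 ((PMF.mem_support_map_iff _ _ _).2 ⟨a, ha, rfl⟩)
    · exact (D.galois _ _).1 (hwl.B2a _ hex.2.choose_spec a ha) ⟨s, hs, rfl⟩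
  · exact absurd hstep (lt_irrefl _)

/-- Trace lifting from an arbitrary node and an arbitrary state it represents. The root `n₀`
only fixes the initial state of the induced MDP and plays no role for its traces. -/
theorem lift_from (hwl : WellLabeled M D P) (hfin : Finished M P) (n₀ : Node)
    (steps : List (Cmd × Val)) : ∀ (n : Node) (s : Val), s ∈ D.conc (P.La n) →
    MDP.IsTrace M.toMDP s steps →
    ∃ τ : List ((Cmd ⊕ Unit) × Node),
      MDP.IsTrace (toMDP M P n₀) n τ ∧
      List.Forall₂
        (fun (p : Cmd × Val) (q : (Cmd ⊕ Unit) × Node) =>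
          q.1 = Sum.inl p.1 ∧ p.2 ∈ D.conc (P.La q.2))
        steps (τ.filter fun q => q.1.isLeft) := by
  induction steps with
  | nil => exact fun n s _ _ => ⟨[], trivial, List.Forall₂.nil⟩
  | cons p rest ih =>
    obtain ⟨c, s'⟩ := p
    rintro n s hs ⟨hstep, hrest⟩
    obtain ⟨m, pre, hm, hsm, hpre, hext⟩ := exists_uncovered hwl n₀ hs
    obtain ⟨m', hpos, hs'⟩ := exists_command_step hwl hfin n₀ hm hsm hstep
    obtain ⟨τ, hτ, hall⟩ := ih m' s' hs' hrest
    refine ⟨pre ++ (Sum.inl c, m') :: τ, hext _ ⟨hpos, hτ⟩, ?_⟩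
    rw [List.filter_append, hpre, List.nil_append, List.filter_cons_of_pos rfl]
    exact List.Forall₂.cons ⟨rfl, hs'⟩ hall

end PASG

/-- For any well-labeled finished PASG `P` for `M` with root `n₀`
(`Lc n₀ = val0`, `val0 ∈ γ (La n₀)`) and any trace of `M` from `val0`, there is a trace
of the MDP induced by `P` from `n₀` whose coverless representation (deleting the cover
steps) traverses the same commands through nodes `n₁, …, n_k` with `s_i ∈ γ (La n_i)`
for all `i`. -/
theorem trace_lifting {Val AS Cmd Node : Type*} [PartialOrder AS] [Finite Cmd]
    (M : SymMDP Val Cmd) (D : AbsDom Val AS) (P : PASG Val AS Cmd Node)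
    (hwl : PASG.WellLabeled M D P) (hfin : PASG.Finished M P)
    (n₀ : Node) (hroot : P.Lc n₀ = M.init) (hroota : M.init ∈ D.conc (P.La n₀))
    (steps : List (Cmd × Val)) (htr : MDP.IsTrace M.toMDP M.init steps) :
    ∃ τ : List ((Cmd ⊕ Unit) × Node),
      MDP.IsTrace (PASG.toMDP M P n₀) n₀ τ ∧
      List.Forall₂
        (fun (p : Cmd × Val) (q : (Cmd ⊕ Unit) × Node) =>
          q.1 = Sum.inl p.1 ∧ p.2 ∈ D.conc (P.La q.2))
        steps (τ.filter fun q => q.1.isLeft) := by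
  exact PASG.lift_from hwl hfin n₀ steps n₀ M.init hroota htr
end

section
/- Let P be a well-labeled finished PASG for the symbolic MDP M, and suppose node n is covered by node n' (i.e., (n,n')∈E_C). Then for every finite sequence (c1,a1),…,(ck,ak) of commands with chosen assignments (a_i in the support of d_{c_i}) that is executable from L_c(n) — meaning each guard g_{c_i} evaluates to True in the state obtained by applying a_1,…,a_{i-1} successively to L_c(n) — the same sequence is also executable from L_c(n'). -/
/-!
The claim is strengthened to: any two states in the concretization of the abstract label of one
node `m` execute the same sequences (`PASG.WellLabeled.executable_of_mem_conc`). Covering only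
enlarges the abstract label and leads to a non-covered node, so `m` may be taken expanded. By
constraint A2 every guard has a constant value on the concretization of `La m`, so the first command
is enabled in both states and `m` has an edge for it; the abstract label of the result node contains
both successor states, and induction on the sequence applies. The theorem is the case of the
covering node `n'`, whose abstract label contains both `Lc n` (C1) and `Lc n'` (A1).
-/

open scoped ENNReal

/-- A finite sequence of commands with chosen assignments (each in the support of the
command's distribution) is executable from a state iff each guard holds in the state
obtained by successively applying the previous assignments. -/
def Executable {Val Cmd : Type*} (M : SymMDP Val Cmd) :
    Val → List (Cmd × (Val → Val)) → Prop
  | _, [] => True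
  | s, (c, a) :: rest =>
      M.guard c s ∧ a ∈ (M.dist c).support ∧ Executable M (a s) rest

/-- Concretization is monotone, by the Galois condition. -/
theorem AbsDom.conc_mono {Val AS : Type*} [PartialOrder AS] (D : AbsDom Val AS) {x y : AS}
    (h : x ≤ y) : D.conc x ⊆ D.conc y :=
  (D.galois _ _).1 (((D.galois _ _).2 subset_rfl).trans h)

/-- A2 rules out the value `uk`, so a guard has the same value in every state represented by a node as
in its concrete label. -/
theorem PASG.WellLabeled.guard_iff {Val AS Cmd Node : Type*} [PartialOrder AS]
    {M : SymMDP Val Cmd} {D : AbsDom Val AS} {P : PASG Val AS Cmd Node}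
    (hwl : PASG.WellLabeled M D P) {m : Node} {s : Val} (hs : s ∈ D.conc (P.La m)) (c : Cmd) :
    M.guard c s ↔ M.guard c (P.Lc m) := by
  have hA2 := hwl.A2 m c
  unfold AbsDom.beval cevalTV at hA2
  split_ifs at hA2 with hall hc hnone hc
  · exact iff_of_true (hall s hs) hc
  · exact iff_of_false (hnone s hs) hc

/-- Every node of a finished PASG is represented by an expanded node with a larger abstract
label: itself if it is not covered, its covering node otherwise. -/
theorem PASG.WellLabeled.exists_expanded {Val AS Cmd Node : Type*} [PartialOrder AS]
    {M : SymMDP Val Cmd} {D : AbsDom Val AS} {P : PASG Val AS Cmd Node}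
    (hwl : PASG.WellLabeled M D P) (hfin : PASG.Finished M P) (m : Node) :
    ∃ m', P.La m ≤ P.La m' ∧ P.Expanded M m' := by
  cases hm : P.EC m with
  | none => exact ⟨m, le_rfl, (hfin m).resolve_left fun h => h hm⟩
  | some m' =>
    exact ⟨m', hwl.C2 m m' hm, (hfin m').resolve_left fun h => h (hwl.C3 m m' hm)⟩

/-- States represented by the same node execute the same sequences. -/
theorem PASG.WellLabeled.executable_of_mem_conc {Val AS Cmd Node : Type*} [PartialOrder AS]
    {M : SymMDP Val Cmd} {D : AbsDom Val AS} {P : PASG Val AS Cmd Node}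
    (hwl : PASG.WellLabeled M D P) (hfin : PASG.Finished M P)
    (seq : List (Cmd × (Val → Val))) (m : Node) {s t : Val}
    (hs : s ∈ D.conc (P.La m)) (ht : t ∈ D.conc (P.La m)) (hex : Executable M s seq) :
    Executable M t seq := by
  induction seq generalizing m s t with
  | nil => trivial
  | cons ca rest ih =>
    obtain ⟨c, a⟩ := ca
    obtain ⟨hg, ha, hrest⟩ := hex
    obtain ⟨m', hle, hexp⟩ := hwl.exists_expanded hfin m
    have hs' := D.conc_mono hle hs
    have ht' := D.conc_mono hle ht
    have hg' := (hwl.guard_iff hs' c).1 hg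
    obtain ⟨f, hf⟩ := hexp c hg'
    have hpost : a '' D.conc (P.La m') ⊆ D.conc (P.La (f a)) :=
      (D.galois _ _).1 (hwl.B2a _ hf a ha)
    exact ⟨(hwl.guard_iff ht' c).2 hg', ha,
      ih (f a) (hpost ⟨s, hs', rfl⟩) (hpost ⟨t, ht', rfl⟩) hrest⟩

/-- In a well-labeled finished PASG, if node `n` is covered by `n'`,
then every command/assignment sequence executable from `Lc n` is also executable
from `Lc n'`. -/
theorem covered_executable {Val AS Cmd Node : Type*} [PartialOrder AS] [Finite Cmd]
    (M : SymMDP Val Cmd) (D : AbsDom Val AS) (P : PASG Val AS Cmd Node)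
    (hwl : PASG.WellLabeled M D P) (hfin : PASG.Finished M P)
    (n n' : Node) (hcov : P.EC n = some n')
    (seq : List (Cmd × (Val → Val))) (hex : Executable M (P.Lc n) seq) :
    Executable M (P.Lc n') seq := by
  exact hwl.executable_of_mem_conc hfin seq n' (hwl.C1 n n' hcov) (hwl.A1 n') hex
end

section
/- Let P be a well-labeled finished PASG for the symbolic MDP M with root n₀ (L_c(n₀)=val0), let σ be a memoryless strategy of M, and let σ̂ be the strategy on the MDP induced by P defined by: σ̂(τ̂)=cover if τ̂ ends in a covered node, and σ̂(τ̂)=σ(last state of the concretization of τ̂) if τ̂ is concretizable. Then every trace of the MDP induced by P that is generated with positive probability under σ̂ and whose last action is not cover is concretizable. -/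
/-!
Every prefix of a trace that has positive probability under `σh` is concretizable, by
induction on its length. Let `h` be such a prefix, with concretization `τc`. If `h` ends in
a covered node, the next step is a cover step, which the concretization deletes. Otherwise
`σh` plays the command `σ` chooses in the last state of `τc`. That command is enabled there,
since `σ` is a strategy, so its guard holds and the concretization extends by the assignment
matched with the successor node.

`ConcrRel.snoc` and `concrRel_of_pathProb_pos` carry the argument. `ConcrRel` peels traces
from the front while the induction grows them at the back, hence the need for
`ConcrRel.append`.
-/

open scoped ENNReal

/-- `ConcrRel M P n s l τ` relates a trace `l` of the PASG-induced MDP starting in node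
`n` with its concretization `τ`, a concrete trace starting in state `s`: cover steps are
deleted, and each transition step via an edge `(n, c, f)` and an assignment `a` in the
support of `d_c` (whose result node is `f a`, cf. constraint B2) requires the guard of
`c` to hold in the recomputed concrete state and moves it to `a s`. -/
inductive ConcrRel {Val AS Cmd Node : Type*} (M : SymMDP Val Cmd)
    (P : PASG Val AS Cmd Node) :
    Node → Val → List ((Cmd ⊕ Unit) × Node) → List (Cmd × Val) → Prop
  | nil (n : Node) (s : Val) : ConcrRel M P n s [] []
  | cover {n n' : Node} {s : Val} {l : List ((Cmd ⊕ Unit) × Node)} {τ : List (Cmd × Val)}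
      (hc : P.EC n = some n') (ih : ConcrRel M P n' s l τ) :
      ConcrRel M P n s ((Sum.inr (), n') :: l) τ
  | step {n : Node} {s : Val} {c : Cmd} {f : (Val → Val) → Node} {a : Val → Val}
      {l : List ((Cmd ⊕ Unit) × Node)} {τ : List (Cmd × Val)}
      (he : (n, c, f) ∈ P.ET) (ha : a ∈ (M.dist c).support) (hg : M.guard c s)
      (ih : ConcrRel M P (f a) (a s) l τ) :
      ConcrRel M P n s ((Sum.inl c, f a) :: l) ((c, a s) :: τ)

theorem MDP.lastSt_cons {S A : Type*} (s s' : S) (a : A) (l : List (A × S)) :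
    MDP.lastSt s ((a, s') :: l) = MDP.lastSt s' l := by
  cases h : l.getLast? <;> simp [MDP.lastSt, List.getLast?_cons, h]

theorem MDP.lastSt_concat {S A : Type*} (s s' : S) (a : A) (l : List (A × S)) :
    MDP.lastSt s (l ++ [(a, s')]) = s' := by
  simp [MDP.lastSt]

/-- An enabled command has a true guard: with a false guard the total mass is `0 ≠ 1`. -/
theorem SymMDP.guard_of_enabled {Val Cmd : Type*} {M : SymMDP Val Cmd} {s : Val} {c : Cmd}
    (h : M.toMDP.Enabled s c) : M.guard c s := by
  by_contra hg
  simp [MDP.Enabled, SymMDP.toMDP, hg] at h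

/-- Concretizations compose: the second trace continues from the last node and the last
recomputed concrete state of the first. -/
theorem ConcrRel.append {Val AS Cmd Node : Type*} {M : SymMDP Val Cmd}
    {P : PASG Val AS Cmd Node} {n : Node} {s : Val}
    {l l' : List ((Cmd ⊕ Unit) × Node)} {τ τ' : List (Cmd × Val)}
    (h : ConcrRel M P n s l τ)
    (h' : ConcrRel M P (MDP.lastSt n l) (MDP.lastSt s τ) l' τ') :
    ConcrRel M P n s (l ++ l') (τ ++ τ') := by
  induction h with
  | nil n s => exact h'
  | cover hc _ ih =>
    rw [MDP.lastSt_cons] at h'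
    exact .cover hc (ih h')
  | step he ha hg _ ih =>
    rw [MDP.lastSt_cons, MDP.lastSt_cons] at h'
    exact .step he ha hg (ih h')

/-- A concretizable trace stays concretizable after one more step of positive probability,
provided that the command of that step, if it has one, is enabled in the last concrete
state. -/
theorem ConcrRel.snoc {Val AS Cmd Node : Type*} [PartialOrder AS] {M : SymMDP Val Cmd}
    {P : PASG Val AS Cmd Node} {n₀ n m : Node} {s : Val} {act : Cmd ⊕ Unit}
    {h : List ((Cmd ⊕ Unit) × Node)} {τc : List (Cmd × Val)}
    (hc : ConcrRel M P n s h τc)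
    (hP : (PASG.toMDP M P n₀).P (MDP.lastSt n h) act m ≠ 0)
    (hg : P.EC (MDP.lastSt n h) = none → ∀ c, act = Sum.inl c →
      M.guard c (MDP.lastSt s τc)) :
    ∃ τc', ConcrRel M P n s (h ++ [(act, m)]) τc' := by
  rcases act with c | ⟨⟩
  · simp only [PASG.toMDP] at hP
    split_ifs at hP with hE
    · obtain ⟨a, ha, rfl⟩ := (PMF.mem_support_map_iff _ _ _).1 ((PMF.mem_support_iff _ _).2 hP)
      exact ⟨_, hc.append (.step hE.2.choose_spec ha (hg hE.1 c rfl) (.nil _ _))⟩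
    · exact absurd rfl hP
  · cases hE : P.EC (MDP.lastSt n h) with
    | none => simp [PASG.toMDP, hE] at hP
    | some n' =>
      simp only [PASG.toMDP, hE] at hP
      have hm : m = n' := by
        by_contra hne
        simp [hne] at hP
      subst hm
      exact ⟨_, hc.append (.cover hE (.nil _ _))⟩

/-- The induction over the remaining trace `τ`, for an arbitrary concretizable history
`h`. -/
theorem concrRel_of_pathProb_pos {Val AS Cmd Node : Type*} [PartialOrder AS]
    {M : SymMDP Val Cmd} {P : PASG Val AS Cmd Node} {n₀ : Node}
    {σ : Val → Cmd} (hσ : ∀ s, (M.toMDP).Enabled s (σ s))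
    {σh : List ((Cmd ⊕ Unit) × Node) → Cmd ⊕ Unit}
    (hσh_conc : ∀ (h : List ((Cmd ⊕ Unit) × Node)) (τc : List (Cmd × Val)),
      P.EC (MDP.lastSt n₀ h) = none → ConcrRel M P n₀ M.init h τc →
      σh h = Sum.inl (σ (MDP.lastSt M.init τc)))
    (τ h : List ((Cmd ⊕ Unit) × Node)) (τc : List (Cmd × Val))
    (hc : ConcrRel M P n₀ M.init h τc)
    (hpos : MDP.pathProb (PASG.toMDP M P n₀) σh (MDP.lastSt n₀ h) h τ ≠ 0) :
    ∃ τc', ConcrRel M P n₀ M.init (h ++ τ) τc' := by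
  induction τ generalizing h τc with
  | nil => exact ⟨τc, by simpa using hc⟩
  | cons p τ ih =>
    obtain ⟨act, m⟩ := p
    rw [MDP.pathProb] at hpos
    obtain ⟨hstep, hrest⟩ := mul_ne_zero_iff.1 hpos
    obtain ⟨hact, hP⟩ := (@ite_ne_right_iff _ _ (_) _ _).1 hstep
    obtain ⟨τc', hc'⟩ := hc.snoc hP fun hE c hcmd => by
      have hsel : c = σ (MDP.lastSt M.init τc) :=
        Sum.inl.inj (hcmd.symm.trans (hact.symm.trans (hσh_conc h τc hE hc)))
      exact hsel ▸ SymMDP.guard_of_enabled (hσ _)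
    simpa using ih _ τc' hc' (by rwa [MDP.lastSt_concat])

/-- With `σ` and `σh` as in Statement 7, every trace of the
PASG-induced MDP that has positive probability under `σh` and whose last action is not
`cover` is concretizable. -/
theorem traces_concretizable {Val AS Cmd Node : Type*} [PartialOrder AS] [Finite Cmd]
    (M : SymMDP Val Cmd) (D : AbsDom Val AS) (P : PASG Val AS Cmd Node)
    (hwl : PASG.WellLabeled M D P) (hfin : PASG.Finished M P)
    (n₀ : Node) (hroot : P.Lc n₀ = M.init)
    (σ : Val → Cmd) (hσ : ∀ s, (M.toMDP).Enabled s (σ s))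
    (σh : List ((Cmd ⊕ Unit) × Node) → Cmd ⊕ Unit)
    (hσh_cov : ∀ h : List ((Cmd ⊕ Unit) × Node),
      P.EC (MDP.lastSt n₀ h) ≠ none → σh h = Sum.inr ())
    (hσh_conc : ∀ (h : List ((Cmd ⊕ Unit) × Node)) (τc : List (Cmd × Val)),
      P.EC (MDP.lastSt n₀ h) = none → ConcrRel M P n₀ M.init h τc →
      σh h = Sum.inl (σ (MDP.lastSt M.init τc)))
    (τ : List ((Cmd ⊕ Unit) × Node))
    (hpos : 0 < MDP.pathProb (PASG.toMDP M P n₀) σh n₀ [] τ)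
    (hlast : ∀ p, τ.getLast? = some p → p.1 ≠ Sum.inr ()) :
    ∃ τc : List (Cmd × Val), ConcrRel M P n₀ M.init τ τc := by
  exact concrRel_of_pathProb_pos hσ hσh_conc τ [] [] (.nil _ _) hpos.ne'
end
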